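/- For every j with 0 ≤ j ≤ n and every C^∞ function f on X one has the conjugation identity e^{R_j} · J[ L^T( e^{−R_j} · (J f) ) ] = L f − σ_j f, i.e. as operators on smooth functions e^{R_j} J L^T J e^{−R_j} = L − σ_j. -/

import Mathlib

open scoped BigOperators

noncomputable section

/-- `Vc d` : vectors in ℝ^d. -/
abbrev Vc (d : ℕ) := Fin d → ℝ
/-- Configurations of `m` oscillators. -/
abbrev Cfg (m d : ℕ) := Fin m → Vc d
/-- Phase space X = p × q × r₁ × rₙ (for a chain of `m` oscillators). -/
abbrev Phs (m d : ℕ) := Cfg m d × Cfg m d × Vc d × Vc d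

variable {m d : ℕ}

/-- unit coordinate vector in the p-block -/
def eP (i : Fin m) (a : Fin d) : Phs m d := (Pi.single i (Pi.single a 1), 0, 0, 0)
/-- unit coordinate vector in the q-block -/
def eQ (i : Fin m) (a : Fin d) : Phs m d := (0, Pi.single i (Pi.single a 1), 0, 0)
/-- unit coordinate vector in the r₁-block -/
def eR1 (a : Fin d) : Phs m d := (0, 0, Pi.single a 1, 0)
/-- unit coordinate vector in the rₙ-block -/
def eRn (a : Fin d) : Phs m d := (0, 0, 0, Pi.single a 1)

/-- directional (partial) derivative -/
def PD (f : Phs m d → ℝ) (x v : Phs m d) : ℝ := fderiv ℝ f x v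

variable {n : ℕ}

/-- total potential V(q) = Σᵢ U⁽¹⁾(qᵢ) + Σᵢ U⁽²⁾(qᵢ − qᵢ₊₁) of a chain of n+2 oscillators -/
def Vtot (U1 U2 : Vc d → ℝ) (q : Cfg (n+2) d) : ℝ :=
  (∑ i, U1 (q i)) + ∑ i : Fin (n+1), U2 (q i.castSucc - q i.succ)

/-- the generator L of the dynamics of the chain coupled to two reservoirs -/
def gen (γ lam T1 Tn : ℝ) (U1 U2 : Vc d → ℝ) (f : Phs (n+2) d → ℝ) (x : Phs (n+2) d) : ℝ :=
  (γ * (T1 * ∑ a, PD (fun y => PD f y (eR1 a)) x (eR1 a)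
        - ∑ a, x.2.2.1 a * PD f x (eR1 a))
    + lam * ((∑ a, x.1 0 a * PD f x (eR1 a)) - ∑ a, x.2.2.1 a * PD f x (eP 0 a)))
  + (γ * (Tn * ∑ a, PD (fun y => PD f y (eRn a)) x (eRn a)
        - ∑ a, x.2.2.2 a * PD f x (eRn a))
    + lam * ((∑ a, x.1 (Fin.last (n+1)) a * PD f x (eRn a))
        - ∑ a, x.2.2.2 a * PD f x (eP (Fin.last (n+1)) a)))
  + ∑ i, ((∑ a, x.1 i a * PD f x (eQ i a))
        - ∑ a, fderiv ℝ (Vtot U1 U2) x.2.1 (Pi.single i (Pi.single a 1)) * PD f x (eP i a))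

/-- the formal adjoint Lᵀ of L with respect to Lebesgue measure -/
def genT (γ lam T1 Tn : ℝ) (U1 U2 : Vc d → ℝ) (g : Phs (n+2) d → ℝ) (x : Phs (n+2) d) : ℝ :=
  (γ * (T1 * ∑ a, PD (fun y => PD g y (eR1 a)) x (eR1 a)
        + ∑ a, PD (fun y => y.2.2.1 a * g y) x (eR1 a))
    - lam * ((∑ a, x.1 0 a * PD g x (eR1 a)) - ∑ a, x.2.2.1 a * PD g x (eP 0 a)))
  + (γ * (Tn * ∑ a, PD (fun y => PD g y (eRn a)) x (eRn a)
        + ∑ a, PD (fun y => y.2.2.2 a * g y) x (eRn a))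
    - lam * ((∑ a, x.1 (Fin.last (n+1)) a * PD g x (eRn a))
        - ∑ a, x.2.2.2 a * PD g x (eP (Fin.last (n+1)) a)))
  - ∑ i, ((∑ a, x.1 i a * PD g x (eQ i a))
        - ∑ a, fderiv ℝ (Vtot U1 U2) x.2.1 (Pi.single i (Pi.single a 1)) * PD g x (eP i a))

/-- time reversal (Jf)(p,q,r₁,rₙ) = f(−p,q,r₁,rₙ) -/
def Jop (f : Phs m d → ℝ) : Phs m d → ℝ := fun x => f (-x.1, x.2.1, x.2.2.1, x.2.2.2)

/-- nat-indexed access to the oscillator coordinates (junk value outside the range) -/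
def cfgNat (q : Cfg (n+2) d) (k : ℕ) : Vc d := if h : k < n + 2 then q ⟨k, h⟩ else 0

/-- local energies H_k, 0-indexed: k ∈ {0, …, n+1} -/
def Hloc (U1 U2 : Vc d → ℝ) (k : ℕ) (x : Phs (n+2) d) : ℝ :=
  (∑ a, (cfgNat x.1 k a) ^ 2) / 2 + U1 (cfgNat x.2.1 k)
  + (if k = 0 then 0 else (1/2) * U2 (cfgNat x.2.1 (k-1) - cfgNat x.2.1 k))
  + (if k = n + 1 then 0 else (1/2) * U2 (cfgNat x.2.1 k - cfgNat x.2.1 (k+1)))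

/-- heat flows Φ_j, j ∈ {0, …, n+2}: Φ_0 = −λr₁·p_0 is the flow from the left
reservoir into the chain, Φ_{n+2} = λrₙ·p_{n+1} the flow into the right reservoir,
and for 1 ≤ j ≤ n+1, Φ_j is the flow from the (0-indexed) oscillator j−1 to the
oscillator j. -/
def heatFlow (lam : ℝ) (U2 : Vc d → ℝ) (j : ℕ) (x : Phs (n+2) d) : ℝ :=
  if j = 0 then - lam * ∑ a, x.2.2.1 a * x.1 0 a
  else if j = n + 2 then lam * ∑ a, x.2.2.2 a * x.1 (Fin.last (n+1)) a
  else ∑ a, ((cfgNat x.1 (j-1) a + cfgNat x.1 j a) / 2)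
        * fderiv ℝ U2 (cfgNat x.2.1 (j-1) - cfgNat x.2.1 j) (Pi.single a 1)

/-- entropy production σ_j = (1/Tₙ − 1/T₁) Φ_j -/
def sigmaEP (lam T1 Tn : ℝ) (U2 : Vc d → ℝ) (j : ℕ) (x : Phs (n+2) d) : ℝ :=
  (1 / Tn - 1 / T1) * heatFlow lam U2 j x

/-- two-temperatures Gibbs exponent R_j, j ∈ {0, …, n+2}: the first j oscillators
are weighted with 1/T₁, the remaining ones with 1/Tₙ. -/
def Rj (T1 Tn : ℝ) (U1 U2 : Vc d → ℝ) (j : ℕ) (x : Phs (n+2) d) : ℝ :=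
  (1 / T1) * ((∑ a, (x.2.2.1 a) ^ 2) / 2 + ∑ k ∈ Finset.range j, Hloc U1 U2 k x)
  + (1 / Tn) * ((∑ k ∈ Finset.Ico j (n+2), Hloc U1 U2 k x) + (∑ a, (x.2.2.2 a) ^ 2) / 2)

/-- the time reversal map as a continuous linear map -/
def JL (m d : ℕ) : Phs m d →L[ℝ] Phs m d :=
  (-(ContinuousLinearMap.fst ℝ (Cfg m d) (Cfg m d × Vc d × Vc d))).prod
    (ContinuousLinearMap.snd ℝ (Cfg m d) (Cfg m d × Vc d × Vc d))

lemma JL_apply (x : Phs m d) : JL m d x = (-x.1, x.2) := rfl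

lemma JL_JL (x : Phs m d) : JL m d (JL m d x) = x := by simp [JL_apply]

lemma Jop_eq (f : Phs m d → ℝ) : Jop f = fun x => f (JL m d x) := rfl

lemma JL_eP (i : Fin m) (a : Fin d) : JL m d (eP i a) = - eP i a := by
  simp [JL_apply, eP]

lemma JL_eQ (i : Fin m) (a : Fin d) : JL m d (eQ i a) = eQ i a := by
  simp [JL_apply, eQ]

lemma JL_eR1 (a : Fin d) : JL m d (eR1 a) = eR1 a := by
  simp [JL_apply, eR1]

lemma JL_eRn (a : Fin d) : JL m d (eRn a) = eRn a := by
  simp [JL_apply, eRn]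

lemma PD_J (f : Phs m d → ℝ) (hf : Differentiable ℝ f) (x v : Phs m d) :
    PD (fun y => f (JL m d y)) x v = PD f (JL m d x) (JL m d v) := by
  unfold PD
  have h := ((hf (JL m d x)).hasFDerivAt.comp x (JL m d).hasFDerivAt).fderiv
  have h2 : (f ∘ (JL m d : Phs m d → Phs m d)) = fun y => f (JL m d y) := rfl
  rw [h2] at h
  rw [h]; rfl

lemma diff_PD (f : Phs m d → ℝ) (hf : ContDiff ℝ (⊤ : ℕ∞) f) (v : Phs m d) :
    Differentiable ℝ (fun y => PD f y v) := by
  have h : ContDiff ℝ 1 (fderiv ℝ f) := hf.fderiv_right (by norm_cast)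
  exact (h.differentiable (by norm_num)).clm_apply (differentiable_const v)

lemma PD_mul (f g : Phs m d → ℝ) (hf : Differentiable ℝ f) (hg : Differentiable ℝ g)
    (x v : Phs m d) :
    PD (fun y => f y * g y) x v = f x * PD g x v + PD f x v * g x := by
  unfold PD
  rw [fderiv_fun_mul (hf x) (hg x)]
  simp; ring

lemma PD_sub (f g : Phs m d → ℝ) (hf : Differentiable ℝ f) (hg : Differentiable ℝ g)
    (x v : Phs m d) :
    PD (fun y => f y - g y) x v = PD f x v - PD g x v := by
  unfold PD
  rw [fderiv_fun_sub (hf x) (hg x)]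
  simp

lemma PD_exp (R : Phs m d → ℝ) (hR : Differentiable ℝ R) (x v : Phs m d) :
    PD (fun y => Real.exp (- R y)) x v = - Real.exp (- R x) * PD R x v := by
  unfold PD
  have h : HasFDerivAt (fun y => Real.exp (- R y)) _ x := (hR x).hasFDerivAt.neg.exp
  rw [h.fderiv]
  simp

lemma PD_conj (R f : Phs m d → ℝ) (hR : Differentiable ℝ R) (hf : Differentiable ℝ f)
    (x v : Phs m d) :
    PD (fun y => Real.exp (- R y) * f y) x v
      = Real.exp (- R x) * (PD f x v - PD R x v * f x) := by
  have h : Differentiable ℝ (fun y => Real.exp (- R y)) := hR.neg.exp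
  rw [PD_mul _ _ h hf, PD_exp _ hR]; ring

lemma PD2_conj (R f : Phs m d → ℝ) (hR : ContDiff ℝ (⊤ : ℕ∞) R) (hf : ContDiff ℝ (⊤ : ℕ∞) f)
    (x v : Phs m d) :
    PD (fun z => PD (fun y => Real.exp (- R y) * f y) z v) x v
      = Real.exp (- R x) * (PD (fun z => PD f z v) x v - 2 * PD R x v * PD f x v
        + ((PD R x v) ^ 2 - PD (fun z => PD R z v) x v) * f x) := by
  have dR : Differentiable ℝ R := hR.differentiable (by simp)
  have df : Differentiable ℝ f := hf.differentiable (by simp)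
  have e : (fun z => PD (fun y => Real.exp (- R y) * f y) z v)
      = fun z => Real.exp (- R z) * (PD f z v - PD R z v * f z) := by
    funext z; exact PD_conj R f dR df z v
  have d1 := diff_PD f hf v
  have d2 := diff_PD R hR v
  have d3 : Differentiable ℝ (fun y => PD R y v * f y) := d2.mul df
  have d4 : Differentiable ℝ (fun y => PD f y v - PD R y v * f y) := d1.sub d3
  rw [e, PD_conj R _ dR d4, PD_sub _ _ d1 d3, PD_mul _ _ d2 df]
  ring

/-- weighted potential -/
def Wpot (U1 U2 : Vc d → ℝ) (c : Fin (n+2) → ℝ) (b : Fin (n+1) → ℝ) (q : Cfg (n+2) d) : ℝ :=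
  (∑ i, c i * U1 (q i)) + ∑ i : Fin (n+1), b i * U2 (q i.castSucc - q i.succ)

lemma Wpot_fderiv (U1 U2 : Vc d → ℝ) (h1 : Differentiable ℝ U1) (h2 : Differentiable ℝ U2)
    (c : Fin (n+2) → ℝ) (b : Fin (n+1) → ℝ) (q v : Cfg (n+2) d) :
    fderiv ℝ (Wpot U1 U2 c b) q v
      = (∑ i, c i * fderiv ℝ U1 (q i) (v i))
        + ∑ i : Fin (n+1), b i * fderiv ℝ U2 (q i.castSucc - q i.succ)
            (v i.castSucc - v i.succ) := by
  have hp : ∀ i : Fin (n+2), HasFDerivAt (fun q : Cfg (n+2) d => q i)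
      (ContinuousLinearMap.proj (R := ℝ) (φ := fun _ : Fin (n+2) => Vc d) i) q :=
    fun i => (ContinuousLinearMap.proj (R := ℝ) (φ := fun _ : Fin (n+2) => Vc d) i).hasFDerivAt
  have a1 : HasFDerivAt (fun q : Cfg (n+2) d => ∑ i, c i * U1 (q i)) _ q :=
    HasFDerivAt.fun_sum (fun i _ => (((h1 (q i)).hasFDerivAt.comp q (hp i)).const_mul (c i)))
  have a2 : HasFDerivAt (fun q : Cfg (n+2) d =>
      ∑ i : Fin (n+1), b i * U2 (q i.castSucc - q i.succ)) _ q :=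
    HasFDerivAt.fun_sum (fun i _ => (((h2 (q i.castSucc - q i.succ)).hasFDerivAt.comp q
      ((hp i.castSucc).sub (hp i.succ))).const_mul (b i)))
  have := (a1.add a2).fderiv
  have e : fderiv ℝ (Wpot U1 U2 c b) q = _ := this
  rw [e]
  simp

lemma Vtot_eq (U1 U2 : Vc d → ℝ) :
    (Vtot U1 U2 : Cfg (n+2) d → ℝ) = Wpot U1 U2 (fun _ => 1) (fun _ => 1) := by
  funext q; simp [Vtot, Wpot]

/-- weights -/
def cw (T1 Tn : ℝ) (j : ℕ) (k : ℕ) : ℝ := if k < j then 1 / T1 else 1 / Tn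

/-- explicit form of R -/
def Rex (T1 Tn : ℝ) (U1 U2 : Vc d → ℝ) (c : Fin (n+2) → ℝ) (b : Fin (n+1) → ℝ)
    (x : Phs (n+2) d) : ℝ :=
  (1 / T1) * ((∑ a, (x.2.2.1 a) ^ 2) / 2) + (1 / Tn) * ((∑ a, (x.2.2.2 a) ^ 2) / 2)
    + (∑ i, c i * ((∑ a, (x.1 i a) ^ 2) / 2)) + Wpot U1 U2 c b x.2.1

lemma Rj_eq (T1 Tn : ℝ) (U1 U2 : Vc d → ℝ) (j : ℕ) (hj : j ≤ n + 2) (x : Phs (n+2) d) :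
    Rj T1 Tn U1 U2 j x = Rex T1 Tn U1 U2 (fun i => cw T1 Tn j i)
      (fun i => (cw T1 Tn j i + cw T1 Tn j (i+1)) / 2) x := by
  have s1 : Rj T1 Tn U1 U2 j x = (1 / T1) * ((∑ a, (x.2.2.1 a) ^ 2) / 2)
      + (1 / Tn) * ((∑ a, (x.2.2.2 a) ^ 2) / 2)
      + ∑ k ∈ Finset.range (n+2), cw T1 Tn j k * Hloc U1 U2 k x := by
    have t1 : ∑ k ∈ Finset.range j, cw T1 Tn j k * Hloc U1 U2 k x
        = (1 / T1) * ∑ k ∈ Finset.range j, Hloc U1 U2 k x := by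
      rw [Finset.mul_sum]
      refine Finset.sum_congr rfl fun k hk => ?_
      rw [cw, if_pos (Finset.mem_range.1 hk)]
    have t2 : ∑ k ∈ Finset.Ico j (n+2), cw T1 Tn j k * Hloc U1 U2 k x
        = (1 / Tn) * ∑ k ∈ Finset.Ico j (n+2), Hloc U1 U2 k x := by
      rw [Finset.mul_sum]
      refine Finset.sum_congr rfl fun k hk => ?_
      rw [cw, if_neg (by have := (Finset.mem_Ico.1 hk).1; omega)]
    rw [← Finset.sum_range_add_sum_Ico _ hj, t1, t2, Rj]
    ring
  rw [s1, Finset.sum_range, Rex, Wpot]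
  have s2 : ∀ i : Fin (n+2), cw T1 Tn j i * Hloc U1 U2 i x
      = cw T1 Tn j i * ((∑ a, (x.1 i a) ^ 2) / 2) + cw T1 Tn j i * U1 (x.2.1 i)
       + (cw T1 Tn j i * (if (i : ℕ) = 0 then 0 else
            (1/2) * U2 (cfgNat x.2.1 ((i : ℕ)-1) - cfgNat x.2.1 i))
       + cw T1 Tn j i * (if (i : ℕ) = n + 1 then 0 else
            (1/2) * U2 (cfgNat x.2.1 i - cfgNat x.2.1 ((i : ℕ)+1)))) := by
    intro i
    have e1 : cfgNat x.1 (i : ℕ) = x.1 i := by simp [cfgNat]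
    have e2 : cfgNat x.2.1 (i : ℕ) = x.2.1 i := by simp [cfgNat]
    rw [Hloc, e1, e2]; ring
  rw [Finset.sum_congr rfl fun i _ => s2 i]
  simp only [Finset.sum_add_distrib]
  have s3 : (∑ i : Fin (n+2), cw T1 Tn j i * (if (i : ℕ) = 0 then 0 else
            (1/2) * U2 (cfgNat x.2.1 ((i : ℕ)-1) - cfgNat x.2.1 i)))
      = ∑ i : Fin (n+1), cw T1 Tn j (i+1) / 2 * U2 (x.2.1 i.castSucc - x.2.1 i.succ) := by
    rw [Fin.sum_univ_succ]
    simp only [Fin.val_zero, if_true, mul_zero, zero_add]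
    refine Finset.sum_congr rfl fun i _ => ?_
    have e1 : cfgNat x.2.1 ((i : ℕ) + 1) = x.2.1 i.succ := by
      rw [cfgNat, dif_pos (by omega)]; rfl
    have e2 : cfgNat x.2.1 (i : ℕ) = x.2.1 i.castSucc := by
      rw [cfgNat, dif_pos (by omega)]; rfl
    simp only [Fin.val_succ, Nat.add_sub_cancel, e1, e2]
    rw [if_neg (by omega)]; ring
  have s4 : (∑ i : Fin (n+2), cw T1 Tn j i * (if (i : ℕ) = n + 1 then 0 else
            (1/2) * U2 (cfgNat x.2.1 i - cfgNat x.2.1 ((i : ℕ)+1))))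
      = ∑ i : Fin (n+1), cw T1 Tn j i / 2 * U2 (x.2.1 i.castSucc - x.2.1 i.succ) := by
    rw [Fin.sum_univ_castSucc]
    simp only [Fin.val_last, if_true, mul_zero, add_zero]
    refine Finset.sum_congr rfl fun i _ => ?_
    have e1 : cfgNat x.2.1 ((i : ℕ) + 1) = x.2.1 i.succ := by
      rw [cfgNat, dif_pos (by omega)]; rfl
    have e2 : cfgNat x.2.1 (i : ℕ) = x.2.1 i.castSucc := by
      rw [cfgNat, dif_pos (by omega)]; rfl
    simp only [Fin.val_castSucc, e1, e2]
    rw [if_neg (by omega)]; ring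
  rw [s3, s4]
  have s5 : ∑ i : Fin (n+1), (cw T1 Tn j i + cw T1 Tn j (i+1)) / 2
        * U2 (x.2.1 i.castSucc - x.2.1 i.succ)
      = (∑ i : Fin (n+1), cw T1 Tn j (i+1) / 2 * U2 (x.2.1 i.castSucc - x.2.1 i.succ))
       + ∑ i : Fin (n+1), cw T1 Tn j i / 2 * U2 (x.2.1 i.castSucc - x.2.1 i.succ) := by
    rw [← Finset.sum_add_distrib]
    exact Finset.sum_congr rfl fun i _ => by ring
  rw [s5]; ring

lemma Wpot_contDiff (U1 U2 : Vc d → ℝ) (h1 : ContDiff ℝ (⊤ : ℕ∞) U1) (h2 : ContDiff ℝ (⊤ : ℕ∞) U2)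
    (c : Fin (n+2) → ℝ) (b : Fin (n+1) → ℝ) : ContDiff ℝ (⊤ : ℕ∞) (Wpot U1 U2 c b) := by
  unfold Wpot; fun_prop

lemma Rex_contDiff (T1 Tn : ℝ) (U1 U2 : Vc d → ℝ)
    (h1 : ContDiff ℝ (⊤ : ℕ∞) U1) (h2 : ContDiff ℝ (⊤ : ℕ∞) U2)
    (c : Fin (n+2) → ℝ) (b : Fin (n+1) → ℝ) : ContDiff ℝ (⊤ : ℕ∞) (Rex T1 Tn U1 U2 c b) := by
  have := Wpot_contDiff U1 U2 h1 h2 c b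
  unfold Rex; fun_prop

lemma fsq (l : Phs m d →L[ℝ] ℝ) (x : Phs m d) :
    HasFDerivAt (fun y => (l y) ^ 2) ((2 * l x) • l) x := by
  have := (l.hasFDerivAt (x := x)).pow 2
  simpa using this

/-- coordinate maps -/
def lP (i : Fin m) (a : Fin d) : Phs m d →L[ℝ] ℝ :=
  (ContinuousLinearMap.proj (R := ℝ) (φ := fun _ : Fin d => ℝ) a).comp
    ((ContinuousLinearMap.proj (R := ℝ) (φ := fun _ : Fin m => Vc d) i).comp
      (ContinuousLinearMap.fst ℝ (Cfg m d) (Cfg m d × Vc d × Vc d)))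

/-- coordinate maps -/
def lR1 (a : Fin d) : Phs m d →L[ℝ] ℝ :=
  (ContinuousLinearMap.proj (R := ℝ) (φ := fun _ : Fin d => ℝ) a).comp
    ((ContinuousLinearMap.fst ℝ (Vc d) (Vc d)).comp
     ((ContinuousLinearMap.snd ℝ (Cfg m d) (Vc d × Vc d)).comp
      (ContinuousLinearMap.snd ℝ (Cfg m d) (Cfg m d × Vc d × Vc d))))

/-- coordinate maps -/
def lRn (a : Fin d) : Phs m d →L[ℝ] ℝ :=
  (ContinuousLinearMap.proj (R := ℝ) (φ := fun _ : Fin d => ℝ) a).comp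
    ((ContinuousLinearMap.snd ℝ (Vc d) (Vc d)).comp
     ((ContinuousLinearMap.snd ℝ (Cfg m d) (Vc d × Vc d)).comp
      (ContinuousLinearMap.snd ℝ (Cfg m d) (Cfg m d × Vc d × Vc d))))

/-- projection to q -/
def lQ : Phs m d →L[ℝ] Cfg m d :=
  (ContinuousLinearMap.fst ℝ (Cfg m d) (Vc d × Vc d)).comp
      (ContinuousLinearMap.snd ℝ (Cfg m d) (Cfg m d × Vc d × Vc d))

lemma lP_apply (i : Fin m) (a : Fin d) (x : Phs m d) : lP i a x = x.1 i a := rfl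
lemma lR1_apply (a : Fin d) (x : Phs m d) : lR1 a x = x.2.2.1 a := rfl
lemma lRn_apply (a : Fin d) (x : Phs m d) : lRn a x = x.2.2.2 a := rfl
lemma lQ_apply (x : Phs m d) : lQ x = x.2.1 := rfl

lemma PD_Rex (T1 Tn : ℝ) (U1 U2 : Vc d → ℝ)
    (h1 : ContDiff ℝ (⊤ : ℕ∞) U1) (h2 : ContDiff ℝ (⊤ : ℕ∞) U2)
    (c : Fin (n+2) → ℝ) (b : Fin (n+1) → ℝ) (x v : Phs (n+2) d) :
    PD (Rex T1 Tn U1 U2 c b) x v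
      = (1 / T1) * (∑ a, x.2.2.1 a * v.2.2.1 a) + (1 / Tn) * (∑ a, x.2.2.2 a * v.2.2.2 a)
        + (∑ i, c i * ∑ a, x.1 i a * v.1 i a) + fderiv ℝ (Wpot U1 U2 c b) x.2.1 v.2.1 := by
  have dW := (Wpot_contDiff U1 U2 h1 h2 c b).differentiable (by simp)
  have a1 : HasFDerivAt (fun y : Phs (n+2) d => (1 / T1) * ((∑ a, (lR1 a y) ^ 2) * 2⁻¹)) _ x :=
    ((HasFDerivAt.fun_sum (fun a _ => fsq (lR1 a) x)).mul_const _).const_mul _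
  have a2 : HasFDerivAt (fun y : Phs (n+2) d => (1 / Tn) * ((∑ a, (lRn a y) ^ 2) * 2⁻¹)) _ x :=
    ((HasFDerivAt.fun_sum (fun a _ => fsq (lRn a) x)).mul_const _).const_mul _
  have a3 : HasFDerivAt (fun y : Phs (n+2) d =>
      ∑ i, c i * ((∑ a, (lP i a y) ^ 2) * 2⁻¹)) _ x :=
    HasFDerivAt.fun_sum (fun i _ =>
      ((HasFDerivAt.fun_sum (fun a _ => fsq (lP i a) x)).mul_const _).const_mul _)
  have a4 : HasFDerivAt (fun y : Phs (n+2) d => Wpot U1 U2 c b (lQ y)) _ x :=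
    (dW (lQ x)).hasFDerivAt.comp x lQ.hasFDerivAt
  have e := (((a1.add a2).add a3).add a4).fderiv
  have e0 : Rex T1 Tn U1 U2 c b = ((((fun y : Phs (n+2) d => (1 / T1) * ((∑ a, (lR1 a y) ^ 2) * 2⁻¹))
      + (fun y : Phs (n+2) d => (1 / Tn) * ((∑ a, (lRn a y) ^ 2) * 2⁻¹)))
      + (fun y : Phs (n+2) d => ∑ i, c i * ((∑ a, (lP i a y) ^ 2) * 2⁻¹)))
      + (fun y : Phs (n+2) d => Wpot U1 U2 c b (lQ y))) := by
    funext y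
    simp [Rex, lP_apply, lR1_apply, lRn_apply, lQ_apply, div_eq_mul_inv]
  rw [PD, e0, e]
  have k : ∀ (ι : Type) [Fintype ι] (u w : ι → ℝ),
      (2 : ℝ)⁻¹ * ∑ a, 2 * u a * w a = ∑ a, u a * w a := by
    intro ι _ u w
    rw [Finset.mul_sum]; exact Finset.sum_congr rfl fun a _ => by ring
  simp [lP_apply, lR1_apply, lRn_apply, lQ_apply, k]

lemma PD_Rex_eR1 (T1 Tn : ℝ) (U1 U2 : Vc d → ℝ)
    (h1 : ContDiff ℝ (⊤ : ℕ∞) U1) (h2 : ContDiff ℝ (⊤ : ℕ∞) U2)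
    (c : Fin (n+2) → ℝ) (b : Fin (n+1) → ℝ) (x : Phs (n+2) d) (a : Fin d) :
    PD (Rex T1 Tn U1 U2 c b) x (eR1 a) = (1 / T1) * x.2.2.1 a := by
  rw [PD_Rex _ _ _ _ h1 h2]; simp [eR1, Pi.single_apply]

lemma PD_Rex_eRn (T1 Tn : ℝ) (U1 U2 : Vc d → ℝ)
    (h1 : ContDiff ℝ (⊤ : ℕ∞) U1) (h2 : ContDiff ℝ (⊤ : ℕ∞) U2)
    (c : Fin (n+2) → ℝ) (b : Fin (n+1) → ℝ) (x : Phs (n+2) d) (a : Fin d) :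
    PD (Rex T1 Tn U1 U2 c b) x (eRn a) = (1 / Tn) * x.2.2.2 a := by
  rw [PD_Rex _ _ _ _ h1 h2]; simp [eRn, Pi.single_apply]

lemma PD_Rex_eQ (T1 Tn : ℝ) (U1 U2 : Vc d → ℝ)
    (h1 : ContDiff ℝ (⊤ : ℕ∞) U1) (h2 : ContDiff ℝ (⊤ : ℕ∞) U2)
    (c : Fin (n+2) → ℝ) (b : Fin (n+1) → ℝ) (x : Phs (n+2) d) (i : Fin (n+2)) (a : Fin d) :
    PD (Rex T1 Tn U1 U2 c b) x (eQ i a)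
      = fderiv ℝ (Wpot U1 U2 c b) x.2.1 (Pi.single i (Pi.single a 1)) := by
  rw [PD_Rex _ _ _ _ h1 h2]; simp [eQ]

lemma PD_Rex_eP (T1 Tn : ℝ) (U1 U2 : Vc d → ℝ)
    (h1 : ContDiff ℝ (⊤ : ℕ∞) U1) (h2 : ContDiff ℝ (⊤ : ℕ∞) U2)
    (c : Fin (n+2) → ℝ) (b : Fin (n+1) → ℝ) (x : Phs (n+2) d) (i : Fin (n+2)) (a : Fin d) :
    PD (Rex T1 Tn U1 U2 c b) x (eP i a) = c i * x.1 i a := by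
  rw [PD_Rex _ _ _ _ h1 h2]
  simp only [eP]
  rw [Finset.sum_eq_single i]
  · simp [Pi.single_apply]
  · intro k _ hk; simp [hk]
  · simp

lemma PD_lin (l : Phs m d →L[ℝ] ℝ) (x v : Phs m d) : PD (fun y => l y) x v = l v := by
  unfold PD; rw [l.fderiv]

lemma PD_Rex_eR1_eR1 (T1 Tn : ℝ) (U1 U2 : Vc d → ℝ)
    (h1 : ContDiff ℝ (⊤ : ℕ∞) U1) (h2 : ContDiff ℝ (⊤ : ℕ∞) U2)
    (c : Fin (n+2) → ℝ) (b : Fin (n+1) → ℝ) (x : Phs (n+2) d) (a : Fin d) :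
    PD (fun y => PD (Rex T1 Tn U1 U2 c b) y (eR1 a)) x (eR1 a) = 1 / T1 := by
  have : (fun y => PD (Rex T1 Tn U1 U2 c b) y (eR1 a))
      = fun y => ((1 / T1) • (lR1 a : Phs (n+2) d →L[ℝ] ℝ)) y := by
    funext y; rw [PD_Rex_eR1 _ _ _ _ h1 h2]; rfl
  rw [this, PD_lin]; simp [lR1_apply, eR1]

lemma PD_Rex_eRn_eRn (T1 Tn : ℝ) (U1 U2 : Vc d → ℝ)
    (h1 : ContDiff ℝ (⊤ : ℕ∞) U1) (h2 : ContDiff ℝ (⊤ : ℕ∞) U2)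
    (c : Fin (n+2) → ℝ) (b : Fin (n+1) → ℝ) (x : Phs (n+2) d) (a : Fin d) :
    PD (fun y => PD (Rex T1 Tn U1 U2 c b) y (eRn a)) x (eRn a) = 1 / Tn := by
  have : (fun y => PD (Rex T1 Tn U1 U2 c b) y (eRn a))
      = fun y => ((1 / Tn) • (lRn a : Phs (n+2) d →L[ℝ] ℝ)) y := by
    funext y; rw [PD_Rex_eRn _ _ _ _ h1 h2]; rfl
  rw [this, PD_lin]; simp [lRn_apply, eRn]

lemma sum_single_cfg (A : Cfg m d →L[ℝ] ℝ) (v : Cfg m d) :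
    ∑ i, ∑ a, v i a * A (Pi.single i (Pi.single a 1)) = A v := by
  have hv : v = ∑ i, ∑ a, v i a • (Pi.single i (Pi.single a (1:ℝ)) : Cfg m d) := by
    funext k b
    simp [Finset.sum_apply, Pi.single_apply, apply_ite, ite_apply]
  conv_rhs => rw [hv]
  simp

lemma sum_single_vc (A : Vc d →L[ℝ] ℝ) (v : Vc d) :
    ∑ a, v a * A (Pi.single a 1) = A v := by
  have hv : v = ∑ a, v a • (Pi.single a (1:ℝ) : Vc d) := by
    funext b
    simp [Finset.sum_apply, Pi.single_apply]
  conv_rhs => rw [hv]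
  simp

/-- bond identity -/
lemma bond_id (U1 U2 : Vc d → ℝ) (h1 : Differentiable ℝ U1) (h2 : Differentiable ℝ U2)
    (w : ℕ → ℝ) (q p : Cfg (n+2) d) :
    fderiv ℝ (Vtot U1 U2) q (fun i a => w i * p i a)
      - fderiv ℝ (Wpot U1 U2 (fun i => w i) (fun i => (w i + w (i+1)) / 2)) q p
    = ∑ i : Fin (n+1), (w i - w (i+1)) / 2
        * fderiv ℝ U2 (q i.castSucc - q i.succ) (p i.castSucc + p i.succ) := by
  rw [Vtot_eq, Wpot_fderiv _ _ h1 h2, Wpot_fderiv _ _ h1 h2]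
  have e : ∀ (i : Fin (n+2)) (A : Vc d →L[ℝ] ℝ), A (fun a => w i * p i a) = w i * A (p i) :=
    fun i A => by rw [← smul_eq_mul, ← map_smul]; rfl
  simp only [one_mul, map_sub, map_add, e]
  simp only [Fin.val_castSucc, Fin.val_succ]
  rw [add_sub_add_left_eq_sub, ← Finset.sum_sub_distrib]
  exact Finset.sum_congr rfl fun i _ => by ring

lemma sigma_id (lam T1 Tn : ℝ) (U1 U2 : Vc d → ℝ) (h1 : Differentiable ℝ U1)
    (h2 : Differentiable ℝ U2) (j : ℕ) (hj : j ≤ n + 2) (x : Phs (n+2) d) :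
    fderiv ℝ (Vtot U1 U2) x.2.1 (fun i a => cw T1 Tn j i * x.1 i a)
      - fderiv ℝ (Wpot U1 U2 (fun i => cw T1 Tn j i)
          (fun i => (cw T1 Tn j i + cw T1 Tn j (i+1)) / 2)) x.2.1 x.1
      + lam * (cw T1 Tn j 0 - 1 / T1) * (∑ a, x.2.2.1 a * x.1 0 a)
      + lam * (cw T1 Tn j (n+1) - 1 / Tn) * (∑ a, x.2.2.2 a * x.1 (Fin.last (n+1)) a)
    = - sigmaEP lam T1 Tn U2 j x := by
  rw [bond_id U1 U2 h1 h2, sigmaEP, heatFlow]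
  by_cases h0 : j = 0
  · subst h0; simp [cw]; ring
  by_cases hn : j = n + 2
  · subst hn
    have : ∀ i : Fin (n+1), cw T1 Tn (n+2) i - cw T1 Tn (n+2) (i+1) = 0 := by
      intro i; simp only [cw]; rw [if_pos (by omega), if_pos (by omega)]; ring
    simp only [this]
    simp [cw]; ring
  · rw [if_neg h0, if_neg hn]
    obtain ⟨k, rfl⟩ := Nat.exists_eq_succ_of_ne_zero h0
    have hk : k < n + 1 := by omega
    rw [Finset.sum_eq_single (⟨k, hk⟩ : Fin (n+1))]
    · have c0 : cw T1 Tn (k+1) 0 = 1 / T1 := by simp [cw]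
      have c1 : cw T1 Tn (k+1) (n+1) = 1 / Tn := by rw [cw, if_neg (by omega)]
      have c2 : cw T1 Tn (k+1) k = 1 / T1 := by simp [cw]
      have c3 : cw T1 Tn (k+1) (k+1) = 1 / Tn := by simp [cw]
      have f : ∀ q : Cfg (n+2) d, cfgNat q (k+1) = q (Fin.succ ⟨k, hk⟩) := by
        intro q; rw [cfgNat, dif_pos (by omega)]; rfl
      have f' : ∀ q : Cfg (n+2) d, cfgNat q k = q (Fin.castSucc ⟨k, hk⟩) := by
        intro q; rw [cfgNat, dif_pos (by omega)]; rfl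
      simp only [Nat.succ_eq_add_one, Nat.add_sub_cancel, c0, c1, c2, c3, f, f']
      rw [← sum_single_vc (fderiv ℝ U2 _)]
      have : ∀ (u v : Vc d) (A : Fin d → ℝ), ∑ a, (u a + v a) / 2 * A a
          = 2⁻¹ * ∑ a, (u + v) a * A a := by
        intro u v A
        rw [Finset.mul_sum]
        exact Finset.sum_congr rfl fun a _ => by simp; ring
      rw [this _ _ (fun a : Fin d => fderiv ℝ U2 _ (Pi.single a 1))]
      ring
    · intro i _ hi
      have hi' : (i : ℕ) ≠ k := fun h => hi (Fin.ext h)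
      have : cw T1 Tn (k+1) i = cw T1 Tn (k+1) (i+1) := by
        simp only [cw]
        by_cases h : (i : ℕ) < k
        · rw [if_pos (by omega), if_pos (by omega)]
        · rw [if_neg (by omega), if_neg (by omega)]
      simp [this]
    · simp

lemma conjE {E E' A B : ℝ} (hE : E * E' = 1) (h : A = E' * B) : E * A = B := by
  rw [h, ← mul_assoc, hE, one_mul]

lemma alg1 (T E F : ℝ) (hT : T ≠ 0) (u r w : Fin d → ℝ) :
    T * (∑ a, E * (u a - 2 * (1 / T * r a) * w a + ((1 / T * r a) ^ 2 - 1 / T) * F))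
      + ∑ a, (r a * (E * (w a - 1 / T * r a * F)) + 1 * (E * F))
    = E * (T * (∑ a, u a) - ∑ a, r a * w a) := by
  rw [mul_sub]
  simp only [Finset.mul_sum]
  rw [← Finset.sum_add_distrib, ← Finset.sum_sub_distrib]
  refine Finset.sum_congr rfl fun a _ => ?_
  field_simp; ring

lemma alg2 (s c E F : ℝ) (p r w v : Fin d → ℝ) :
    (∑ a, -p a * (E * (w a - s * r a * F))) - ∑ a, r a * (E * (-v a - c * -p a * F))
    = - E * ((∑ a, p a * w a) - ∑ a, r a * v a)
      - E * ((c - s) * (∑ a, r a * p a)) * F := by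
  simp only [mul_sub, Finset.mul_sum, Finset.sum_mul]
  simp only [← Finset.sum_sub_distrib]
  refine Finset.sum_congr rfl fun a _ => ?_
  ring

lemma alg3 (E F : ℝ) (c : Fin m → ℝ) (p Q W V P : Fin m → Fin d → ℝ) :
    (∑ i, ((∑ a, -p i a * (E * (Q i a - W i a * F)))
        - ∑ a, V i a * (E * (-P i a - c i * -p i a * F))))
    = - E * (∑ i, ((∑ a, p i a * Q i a) - ∑ a, V i a * P i a))
      - E * ((∑ i, ∑ a, c i * p i a * V i a) - ∑ i, ∑ a, p i a * W i a) * F := by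
  rw [← Finset.sum_sub_distrib]
  simp only [Finset.mul_sum, Finset.sum_mul]
  rw [← Finset.sum_sub_distrib]
  refine Finset.sum_congr rfl fun i _ => ?_
  simp only [← Finset.sum_sub_distrib, Finset.mul_sum, Finset.sum_mul]
  refine Finset.sum_congr rfl fun a _ => ?_
  ring

/-- for every j ∈ {0,…,n+2} (chain of n+2 oscillators) and every
smooth f one has the conjugation identity
`e^{R_j} · J[Lᵀ(e^{−R_j}·(Jf))] = L f − σ_j f`. -/
theorem stmt2 (n d : ℕ) (hd : 1 ≤ d) (γ lam T1 Tn : ℝ)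
    (hγ : 0 < γ) (hlam : 0 < lam) (hT1 : 0 < T1) (hTn : 0 < Tn)
    (U1 U2 : Vc d → ℝ) (hU1 : ContDiff ℝ (⊤ : ℕ∞) U1) (hU2 : ContDiff ℝ (⊤ : ℕ∞) U2) :
    ∀ j : ℕ, j ≤ n + 2 → ∀ f : Phs (n+2) d → ℝ, ContDiff ℝ (⊤ : ℕ∞) f →
      ∀ x : Phs (n+2) d,
        Real.exp (Rj T1 Tn U1 U2 j x)
            * Jop (genT γ lam T1 Tn U1 U2
                (fun z => Real.exp (- Rj T1 Tn U1 U2 j z) * Jop f z)) x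
          = gen γ lam T1 Tn U1 U2 f x - sigmaEP lam T1 Tn U2 j x * f x := by
  intro j hj f hf x
  have dU1 : Differentiable ℝ U1 := hU1.differentiable (by simp)
  have dU2 : Differentiable ℝ U2 := hU2.differentiable (by simp)
  have hS := sigma_id lam T1 Tn U1 U2 dU1 dU2 j hj x
  have hRj : Rj T1 Tn U1 U2 j = (Rex T1 Tn U1 U2 (fun i => cw T1 Tn j i)
      (fun i => (cw T1 Tn j i + cw T1 Tn j (i+1)) / 2) : Phs (n+2) d → ℝ) := by
    funext y; exact Rj_eq T1 Tn U1 U2 j hj y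
  rw [hRj]
  rw [← sum_single_cfg (fderiv ℝ (Vtot U1 U2) x.2.1),
    ← sum_single_cfg (fderiv ℝ (Wpot U1 U2 _ _) x.2.1)] at hS
  generalize hc : (fun i : Fin (n+2) => cw T1 Tn j i) = c at *
  generalize (fun i : Fin (n+1) => (cw T1 Tn j i + cw T1 Tn j (i+1)) / 2) = b at *
  have hci : ∀ i : Fin (n+2), cw T1 Tn j i = c i := fun i => by rw [← hc]
  have hc0 : cw T1 Tn j 0 = c 0 := by rw [← hc]; rfl
  have hcl : cw T1 Tn j (n+1) = c (Fin.last (n+1)) := by rw [← hc]; rfl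
  rw [hc0, hcl] at hS
  simp only [hci] at hS
  have hR := Rex_contDiff T1 Tn U1 U2 hU1 hU2 c b
  have dR : Differentiable ℝ (Rex T1 Tn U1 U2 c b) := hR.differentiable (by simp)
  have df : Differentiable ℝ f := hf.differentiable (by simp)
  have hF : ContDiff ℝ (⊤ : ℕ∞) (fun y => f (JL (n+2) d y)) := hf.comp (JL (n+2) d).contDiff
  have dF : Differentiable ℝ (fun y => f (JL (n+2) d y)) := hF.differentiable (by simp)
  have hRJ : Rex T1 Tn U1 U2 c b (JL (n+2) d x) = Rex T1 Tn U1 U2 c b x := by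
    simp [Rex, JL_apply]
  have dG : Differentiable ℝ (fun z => Real.exp (- Rex T1 Tn U1 U2 c b z) * f (JL (n+2) d z)) :=
    dR.neg.exp.mul dF
  have p1 := fun v => PD_conj _ _ dR dF (JL (n+2) d x) v
  have p2 := fun v => PD2_conj _ _ hR hF (JL (n+2) d x) v
  have p3 := fun a => PD_mul (fun y : Phs (n+2) d => (lR1 a : Phs (n+2) d →L[ℝ] ℝ) y) _
    (lR1 a).differentiable dG (JL (n+2) d x) (eR1 a)
  have p4 := fun a => PD_mul (fun y : Phs (n+2) d => (lRn a : Phs (n+2) d →L[ℝ] ℝ) y) _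
    (lRn a).differentiable dG (JL (n+2) d x) (eRn a)
  simp only [lR1_apply, lRn_apply] at p3 p4
  have q1 : ∀ a, PD (fun y : Phs (n+2) d => y.2.2.1 a) (JL (n+2) d x) (eR1 a) = 1 := fun a => by
    rw [show (fun y : Phs (n+2) d => y.2.2.1 a) = fun y => (lR1 a : Phs (n+2) d →L[ℝ] ℝ) y from rfl,
      PD_lin]
    simp [lR1_apply, eR1]
  have q2 : ∀ a, PD (fun y : Phs (n+2) d => y.2.2.2 a) (JL (n+2) d x) (eRn a) = 1 := fun a => by
    rw [show (fun y : Phs (n+2) d => y.2.2.2 a) = fun y => (lRn a : Phs (n+2) d →L[ℝ] ℝ) y from rfl,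
      PD_lin]
    simp [lRn_apply, eRn]
  have j1 : ∀ y v, PD (fun y => f (JL (n+2) d y)) y v = PD f (JL (n+2) d y) (JL (n+2) d v) :=
    fun y v => PD_J f df y v
  have j2 : ∀ v, PD (fun y => PD f (JL (n+2) d y) (JL (n+2) d v)) (JL (n+2) d x) v
      = PD (fun y => PD f y (JL (n+2) d v)) x (JL (n+2) d v) := fun v => by
    have := PD_J (fun y => PD f y (JL (n+2) d v)) (diff_PD f hf _) (JL (n+2) d x) v
    rw [JL_JL] at this
    exact this
  have neg1 : ∀ y v, PD f y (-v) = - PD f y v := fun y v => by simp [PD]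
  have k1 : ∀ a, PD (fun z => PD (fun y => f (JL (n+2) d y)) z (eR1 a)) (JL (n+2) d x) (eR1 a)
      = PD (fun y => PD f y (eR1 a)) x (eR1 a) := fun a => by
    have := j2 (eR1 a)
    rw [JL_eR1] at this
    simpa only [j1, JL_eR1] using this
  have k2 : ∀ a, PD (fun z => PD (fun y => f (JL (n+2) d y)) z (eRn a)) (JL (n+2) d x) (eRn a)
      = PD (fun y => PD f y (eRn a)) x (eRn a) := fun a => by
    have := j2 (eRn a)
    rw [JL_eRn] at this
    simpa only [j1, JL_eRn] using this
  simp only [Jop_eq, genT, gen]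
  simp only [p3, p4, p2, k1, k2,
    PD_Rex_eR1_eR1 _ _ _ _ hU1 hU2, PD_Rex_eRn_eRn _ _ _ _ hU1 hU2]
  simp only [p1, q1, q2, j1, JL_JL, hRJ, JL_eP, JL_eQ, JL_eR1, JL_eRn, neg1,
    PD_Rex_eR1 _ _ _ _ hU1 hU2, PD_Rex_eRn _ _ _ _ hU1 hU2,
    PD_Rex_eP _ _ _ _ hU1 hU2, PD_Rex_eQ _ _ _ _ hU1 hU2]
  have hs : sigmaEP lam T1 Tn U2 j x = -(- sigmaEP lam T1 Tn U2 j x) := by ring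
  rw [hs, ← hS]
  have hE : Real.exp (Rex T1 Tn U1 U2 c b x) * Real.exp (- Rex T1 Tn U1 U2 c b x) = 1 := by
    rw [← Real.exp_add]; simp
  simp only [JL_apply, Pi.neg_apply]
  clear p1 p2 p3 p4 q1 q2 j1 j2 neg1 hS hs
  generalize Real.exp (Rex T1 Tn U1 U2 c b x) = E at *
  generalize Real.exp (- Rex T1 Tn U1 U2 c b x) = E' at *

  apply conjE hE
  rw [alg1 T1 E' (f x) hT1.ne' (fun a => PD (fun y => PD f y (eR1 a)) x (eR1 a)) x.2.2.1
      (fun a => PD f x (eR1 a)),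
    alg1 Tn E' (f x) hTn.ne' (fun a => PD (fun y => PD f y (eRn a)) x (eRn a)) x.2.2.2
      (fun a => PD f x (eRn a)),
    alg2 (1 / T1) (c 0) E' (f x) (x.1 0) x.2.2.1 (fun a => PD f x (eR1 a))
      (fun a => PD f x (eP 0 a)),
    alg2 (1 / Tn) (c (Fin.last (n+1))) E' (f x) (x.1 (Fin.last (n+1))) x.2.2.2
      (fun a => PD f x (eRn a)) (fun a => PD f x (eP (Fin.last (n+1)) a)),
    alg3 E' (f x) c x.1 (fun i a => PD f x (eQ i a))
      (fun i a => fderiv ℝ (Wpot U1 U2 c b) x.2.1 (Pi.single i (Pi.single a 1)))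
      (fun i a => fderiv ℝ (Vtot U1 U2) x.2.1 (Pi.single i (Pi.single a 1)))
      (fun i a => PD f x (eP i a))]
  ring


end
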